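/- arXiv:2312.16103 — 2 statements merged into one kernel-verified Lean document; each statement's English description precedes it below -/
import Mathlib

section
/- Let 𝒳 be a nonempty finite set, ν a probability mass function on 𝒳, M ∈ ℕ, α a probability mass function on {0,1,…,M}, h : 𝒳 → ℝ, c ∈ ℝ, and λ > 0. Define the tilted probability mass function γ on {0,1,…,M}×𝒳 by γ(n,x) := α(n)·ν(x)·exp(λ·n·h(x)) / (Σ_{y∈𝒳} ν(y)·exp(λ·n·h(y))), and assume Σ_{n=0}^M Σ_{x∈𝒳} n·h(x)·γ(n,x) = c. Then for every probability mass function γ′ on {0,1,…,M}×𝒳 satisfying Σ_{x∈𝒳} γ′(n,x) = α(n) for all n ∈ {0,…,M} and Σ_{n=0}^M Σ_{x∈𝒳} n·h(x)·γ′(n,x) ≥ c, one has H(γ′ ‖ α⊗ν) ≥ H(γ ‖ α⊗ν), with equality if and only if γ′ = γ. -/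
open scoped BigOperators ENNReal Classical

noncomputable section

/-- Relative entropy `H(p ‖ q) = ∑ₛ p s * log (p s / q s)` of two probability mass
functions on a countable set, with value `∞` when `p` is not absolutely continuous with
respect to `q` (or the defining series diverges); the convention `0·log 0 = 0` is
automatic since `Real.log 0 = 0`. -/
def relEnt {S : Type*} (p q : S → ℝ) : ℝ≥0∞ :=
  if (∀ s, q s = 0 → p s = 0) ∧ Summable (fun s => p s * Real.log (p s / q s)) then
    ENNReal.ofReal (∑' s, p s * Real.log (p s / q s))
  else ⊤

/-!
The tilted law has density `exp g` with respect to `α ⊗ ν`, where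
`g (n, x) = λ·n·h x - log Z n` and `Z n` is the normalizing constant. Hence, for every `γ'`,
`H(γ' ‖ α ⊗ ν) = H(γ' ‖ γ) + ∑ γ' g`, and for `γ' = γ` the first term vanishes. As `γ` and `γ'` have
the same first marginal, `log Z` contributes equally to `∑ γ' g` and `∑ γ g`, so the moment
constraint gives `∑ γ g ≤ ∑ γ' g`. Gibbs' inequality `0 ≤ H(γ' ‖ γ)`, with its equality case,
concludes.
-/

section GibbsInequality

lemma mul_log_div_sub_sub_eq_mul_klFun {a b : ℝ} (hab : b = 0 → a = 0) :
    a * Real.log (a / b) - (a - b) = b * InformationTheory.klFun (a / b) := by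
  rcases eq_or_ne b 0 with rfl | hb
  · simp [hab rfl]
  · rw [InformationTheory.klFun_apply]
    field_simp
    ring

variable {S : Type*} {p q : S → ℝ} {m r : ℝ}

lemma mul_log_div_sub_sub_nonneg (hp : ∀ s, 0 ≤ p s) (hq : ∀ s, 0 ≤ q s)
    (hpq : ∀ s, q s = 0 → p s = 0) (s : S) :
    0 ≤ p s * Real.log (p s / q s) - (p s - q s) := by
  rw [mul_log_div_sub_sub_eq_mul_klFun (hpq s)]
  exact mul_nonneg (hq s) (InformationTheory.klFun_nonneg (div_nonneg (hp s) (hq s)))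

lemma nonneg_of_hasSum_mul_log_div (hp : ∀ s, 0 ≤ p s) (hq : ∀ s, 0 ≤ q s)
    (hpq : ∀ s, q s = 0 → p s = 0) (hpm : HasSum p m) (hqm : HasSum q m)
    (hr : HasSum (fun s => p s * Real.log (p s / q s)) r) : 0 ≤ r := by
  have hsum := hr.sub (hpm.sub hqm)
  rw [sub_self, sub_zero] at hsum
  exact hsum.nonneg (mul_log_div_sub_sub_nonneg hp hq hpq)

lemma eq_of_hasSum_mul_log_div_zero (hp : ∀ s, 0 ≤ p s) (hq : ∀ s, 0 ≤ q s)
    (hpq : ∀ s, q s = 0 → p s = 0) (hpm : HasSum p m) (hqm : HasSum q m)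
    (hr : HasSum (fun s => p s * Real.log (p s / q s)) 0) : p = q := by
  have hsum := hr.sub (hpm.sub hqm)
  rw [sub_self, sub_zero,
    hasSum_zero_iff_of_nonneg (mul_log_div_sub_sub_nonneg hp hq hpq)] at hsum
  funext s
  have hs : q s * InformationTheory.klFun (p s / q s) = 0 := by
    rw [← mul_log_div_sub_sub_eq_mul_klFun (hpq s)]
    exact congrFun hsum s
  rcases mul_eq_zero.1 hs with hq0 | hkl
  · rw [hq0, hpq s hq0]
  · exact eq_of_div_eq_one
      ((InformationTheory.klFun_eq_zero_iff (div_nonneg (hp s) (hq s))).1 hkl)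

end GibbsInequality

section RelEnt

variable {S : Type*} {p p' q g : S → ℝ} {m r c c' : ℝ}

lemma relEnt_ne_top_iff :
    relEnt p q ≠ ⊤ ↔
      (∀ s, q s = 0 → p s = 0) ∧ Summable fun s => p s * Real.log (p s / q s) := by
  unfold relEnt
  split_ifs with hfin
  · exact iff_of_true ENNReal.ofReal_ne_top hfin
  · exact iff_of_false (not_not.2 rfl) hfin

lemma relEnt_eq_ofReal (hpq : ∀ s, q s = 0 → p s = 0)
    (hr : HasSum (fun s => p s * Real.log (p s / q s)) r) :
    relEnt p q = ENNReal.ofReal r := by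
  rw [relEnt, if_pos ⟨hpq, hr.summable⟩, hr.tsum_eq]

lemma mul_log_mul_exp_div_self (b t : ℝ) :
    b * Real.exp t * Real.log (b * Real.exp t / b) = b * Real.exp t * t := by
  rcases eq_or_ne b 0 with rfl | hb
  · simp
  · rw [mul_div_cancel_left₀ _ hb, Real.log_exp]

lemma mul_log_div_mul_exp {a b : ℝ} (hab : b = 0 → a = 0) (t : ℝ) :
    a * Real.log (a / (b * Real.exp t)) = a * Real.log (a / b) - a * t := by
  rcases eq_or_ne a 0 with rfl | ha
  · simp
  · rw [← div_div, Real.log_div (div_ne_zero ha (mt hab ha)) (Real.exp_ne_zero t), Real.log_exp,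
      mul_sub]

theorem relEnt_mul_exp_le_and_eq_iff (hq : ∀ s, 0 ≤ q s) (hqm : HasSum q m)
    (hp : ∀ s, p s = q s * Real.exp (g s)) (hpm : HasSum p m)
    (hpg : HasSum (fun s => p s * g s) c)
    (hp'0 : ∀ s, 0 ≤ p' s) (hp'm : HasSum p' m) (hp'g : HasSum (fun s => p' s * g s) c')
    (hc : c ≤ c') :
    relEnt p q ≤ relEnt p' q ∧ (relEnt p' q = relEnt p q ↔ p' = p) := by
  have hp0 : ∀ s, 0 ≤ p s := fun s => hp s ▸ mul_nonneg (hq s) (Real.exp_nonneg _)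
  have hpq : ∀ s, q s = 0 ↔ p s = 0 := fun s => by simp [hp s]
  have hpq_sum : HasSum (fun s => p s * Real.log (p s / q s)) c := by
    simpa only [hp, mul_log_mul_exp_div_self] using hpg
  have hp_relEnt := relEnt_eq_ofReal (fun s => (hpq s).1) hpq_sum
  have hc0 : 0 ≤ c := nonneg_of_hasSum_mul_log_div hp0 hq (fun s => (hpq s).1) hpm hqm hpq_sum
  rcases eq_or_ne (relEnt p' q) ⊤ with htop | hfin
  · refine ⟨htop ▸ le_top, fun heq => ?_, fun heq => heq ▸ rfl⟩
    exact absurd (hp_relEnt.symm.trans (heq.symm.trans htop)) ENNReal.ofReal_ne_top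
  obtain ⟨hp'q, r, hr⟩ := relEnt_ne_top_iff.1 hfin
  have hp'p : ∀ s, p s = 0 → p' s = 0 := fun s hs => hp'q s ((hpq s).2 hs)
  have hp'p_sum : HasSum (fun s => p' s * Real.log (p' s / p s)) (r - c') := by
    simpa only [hp, mul_log_div_mul_exp (hp'q _)] using hr.sub hp'g
  have gibbs : 0 ≤ r - c' := nonneg_of_hasSum_mul_log_div hp'0 hp0 hp'p hp'm hpm hp'p_sum
  rw [hp_relEnt, relEnt_eq_ofReal hp'q hr]
  refine ⟨ENNReal.ofReal_le_ofReal (by linarith), fun heq => ?_, fun heq => ?_⟩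
  · rw [ENNReal.ofReal_eq_ofReal_iff (by linarith) hc0] at heq
    have hzero : r - c' = 0 := by linarith
    exact eq_of_hasSum_mul_log_div_zero hp'0 hp0 hp'p hp'm hpm (hzero ▸ hp'p_sum)
  · rw [← relEnt_eq_ofReal hp'q hr, heq, hp_relEnt]

end RelEnt

section ExponentialTilt

variable {𝒳 : Type*} {ν φ : 𝒳 → ℝ}

/-- The partition function `∑ᵧ ν y * exp (φ y)`, which normalizes the exponential tilt of the mass
function `ν` by the potential `φ`. It is `0` when the series diverges. -/
def partitionFunction (ν φ : 𝒳 → ℝ) : ℝ :=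
  ∑' y, ν y * Real.exp (φ y)

/-- The exponential tilt of the mass function `ν` by the potential `φ`, normalized to have total
mass one. It is `0` when the partition function diverges. -/
def expTilt (ν φ : 𝒳 → ℝ) (x : 𝒳) : ℝ :=
  ν x * Real.exp (φ x) / partitionFunction ν φ

lemma partitionFunction_pos (hν : ∀ x, 0 ≤ ν x) (hν0 : ν ≠ 0)
    (hφ : Summable fun y => ν y * Real.exp (φ y)) : 0 < partitionFunction ν φ := by
  obtain ⟨x, hx⟩ := Function.ne_iff.1 hν0
  exact hφ.tsum_pos (fun y => mul_nonneg (hν y) (Real.exp_nonneg _)) x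
    (mul_pos ((hν x).lt_of_ne' hx) (Real.exp_pos _))

lemma hasSum_expTilt (hφ : Summable fun y => ν y * Real.exp (φ y))
    (hZ : partitionFunction ν φ ≠ 0) : HasSum (expTilt ν φ) 1 :=
  div_self hZ ▸ hφ.hasSum.div_const _

lemma expTilt_eq_mul_exp_sub_log (hZ : 0 < partitionFunction ν φ) (x : 𝒳) :
    expTilt ν φ x = ν x * Real.exp (φ x - Real.log (partitionFunction ν φ)) := by
  rw [Real.exp_sub, Real.exp_log hZ, expTilt, mul_div_assoc]

end ExponentialTilt

section Marginal

variable {ι 𝒳 : Type*}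

lemma hasSum_mul_fst_iff_of_marginal {α u : ι → ℝ} {ρ : ι × 𝒳 → ℝ} {L : ℝ} (hρ : ∀ p, 0 ≤ ρ p)
    (hmarg : ∀ i, HasSum (fun x => ρ (i, x)) (α i)) :
    HasSum (fun p => ρ p * u p.1) L ↔ HasSum (fun i => α i * u i) L := by
  have hfiber : ∀ i, HasSum (fun x => ρ (i, x) * u i) (α i * u i) :=
    fun i => (hmarg i).mul_right (u i)
  refine ⟨fun hL => hL.prod_fiberwise hfiber, fun hL => ?_⟩
  have hfiber_abs : ∀ i, HasSum (fun x => |ρ (i, x) * u i|) |α i * u i| := fun i => by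
    have hα : 0 ≤ α i := (hmarg i).nonneg fun x => hρ (i, x)
    simpa only [abs_mul, abs_of_nonneg (hρ _), abs_of_nonneg hα] using
      (hmarg i).mul_right |u i|
  have hsummable : Summable fun p : ι × 𝒳 => ρ p * u p.1 := by
    refine Summable.of_abs ((summable_prod_of_nonneg fun p => abs_nonneg _).2
      ⟨fun i => (hfiber_abs i).summable, ?_⟩)
    simpa only [(hfiber_abs _).tsum_eq] using hL.summable.abs
  have hsum := hsummable.hasSum
  rwa [(hsum.prod_fiberwise hfiber).unique hL] at hsum

lemma hasSum_of_marginal {α : ι → ℝ} {ρ : ι × 𝒳 → ℝ} {m : ℝ} (hρ : ∀ p, 0 ≤ ρ p)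
    (hmarg : ∀ i, HasSum (fun x => ρ (i, x)) (α i)) (hα : HasSum α m) : HasSum ρ m := by
  simpa using (hasSum_mul_fst_iff_of_marginal (u := 1) hρ hmarg).2 (by simpa using hα)

lemma hasSum_sum_sum_of_forall_notMem_eq_zero [Fintype 𝒳] {s : Finset ι} {F : ι × 𝒳 → ℝ}
    (hF : ∀ i ∉ s, ∀ x, F (i, x) = 0) : HasSum F (∑ i ∈ s, ∑ x, F (i, x)) := by
  rw [← Finset.sum_product]
  exact hasSum_sum_of_ne_finset_zero fun p hp => hF p.1 (by simpa using hp) p.2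

end Marginal

theorem tilted_minimizes_relative_entropy_general
    {ι 𝒳 : Type*} {ν : 𝒳 → ℝ} (hν0 : ∀ x, 0 ≤ ν x) (hν1 : HasSum ν 1)
    {α : ι → ℝ} (hα0 : ∀ i, 0 ≤ α i) (hα : Summable α)
    {f : ι × 𝒳 → ℝ} {c c' lam : ℝ} (hlam : 0 ≤ lam)
    (hexp : ∀ i, Summable fun y => ν y * Real.exp (lam * f (i, y)))
    {γ : ι × 𝒳 → ℝ}
    (hγdef : ∀ i x, γ (i, x) = α i * expTilt ν (fun y => lam * f (i, y)) x)
    (hγfin : relEnt γ (fun p => α p.1 * ν p.2) ≠ ⊤)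
    (hγc : HasSum (fun p => f p * γ p) c)
    {γ' : ι × 𝒳 → ℝ} (hγ'0 : ∀ p, 0 ≤ γ' p)
    (hγ'marg : ∀ i, HasSum (fun x => γ' (i, x)) (α i))
    (hγ'c : HasSum (fun p => f p * γ' p) c') (hc : c ≤ c') :
    relEnt γ (fun p => α p.1 * ν p.2) ≤ relEnt γ' (fun p => α p.1 * ν p.2) ∧
      (relEnt γ' (fun p => α p.1 * ν p.2) = relEnt γ (fun p => α p.1 * ν p.2) ↔ γ' = γ) := by
  have hν_ne : ν ≠ 0 := by
    rintro rfl
    exact zero_ne_one (hasSum_zero.unique hν1)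
  let Z : ι → ℝ := fun i => partitionFunction ν fun y => lam * f (i, y)
  have hZ : ∀ i, 0 < Z i := fun i => partitionFunction_pos hν0 hν_ne (hexp i)
  let g : ι × 𝒳 → ℝ := fun p => lam * f p - Real.log (Z p.1)
  have hq0 : ∀ p : ι × 𝒳, 0 ≤ α p.1 * ν p.2 := fun p => mul_nonneg (hα0 _) (hν0 _)
  have hγq : ∀ p, γ p = α p.1 * ν p.2 * Real.exp (g p) := fun p => by
    rw [hγdef, expTilt_eq_mul_exp_sub_log (hZ p.1), mul_assoc]
  have hγ0 : ∀ p, 0 ≤ γ p := fun p => hγq p ▸ mul_nonneg (hq0 p) (Real.exp_nonneg _)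
  have hqmarg : ∀ i, HasSum (fun x => α i * ν x) (α i) := fun i => by
    simpa only [mul_one] using hν1.mul_left (α i)
  have hγmarg : ∀ i, HasSum (fun x => γ (i, x)) (α i) := fun i => by
    simpa only [hγdef, mul_one] using (hasSum_expTilt (hexp i) (hZ i).ne').mul_left (α i)
  have hasSum_mul_g {ρ : ι × 𝒳 → ℝ} {a L : ℝ} (ha : HasSum (fun p => f p * ρ p) a)
      (hL : HasSum (fun p => ρ p * Real.log (Z p.1)) L) :
      HasSum (fun p => ρ p * g p) (lam * a - L) :=
    ((ha.mul_left lam).sub hL).congr_fun fun p => by ring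
  have hγg : Summable fun p => γ p * g p := by
    simpa only [hγq, mul_log_mul_exp_div_self] using (relEnt_ne_top_iff.1 hγfin).2
  obtain ⟨L, hγL⟩ : Summable fun p => γ p * Real.log (Z p.1) :=
    ((hγc.summable.mul_left lam).sub hγg).congr fun p => by simp only [g]; ring
  have hγ'L : HasSum (fun p => γ' p * Real.log (Z p.1)) L :=
    (hasSum_mul_fst_iff_of_marginal (u := fun i => Real.log (Z i)) hγ'0 hγ'marg).2
      ((hasSum_mul_fst_iff_of_marginal hγ0 hγmarg).1 hγL)
  exact relEnt_mul_exp_le_and_eq_iff hq0 (hasSum_of_marginal hq0 hqmarg hα.hasSum)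
    hγq (hasSum_of_marginal hγ0 hγmarg hα.hasSum) (hasSum_mul_g hγc hγL)
    hγ'0 (hasSum_of_marginal hγ'0 hγ'marg hα.hasSum) (hasSum_mul_g hγ'c hγ'L)
    (sub_le_sub_right (mul_le_mul_of_nonneg_left hc hlam) L)

/-- **The exponentially tilted law minimizes relative entropy under the constraints.**
Let `𝒳` be a nonempty finite set, `ν` a pmf on `𝒳`, `α` a pmf on `{0, …, M}`,
`h : 𝒳 → ℝ`, `c ∈ ℝ`, `λ > 0`, and define the tilted pmf
`γ (n, x) = α n · ν x · exp (λ·n·h x) / ∑_y ν y · exp (λ·n·h y)`, assumed to satisfy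
`∑_{n,x} n · h x · γ (n, x) = c`.  Then every pmf `γ'` on `{0, …, M} × 𝒳` with
`∑_x γ' (n, x) = α n` for all `n` and `∑_{n,x} n · h x · γ' (n, x) ≥ c` satisfies
`H(γ' ‖ α ⊗ ν) ≥ H(γ ‖ α ⊗ ν)`, with equality iff `γ' = γ`. -/
theorem tilted_minimizes_relative_entropy
    {𝒳 : Type} [Fintype 𝒳] [Nonempty 𝒳]
    (ν : 𝒳 → ℝ) (hν0 : ∀ x, 0 ≤ ν x) (hν1 : ∑ x, ν x = 1)
    (M : ℕ) (α : ℕ → ℝ) (hα0 : ∀ n, 0 ≤ α n) (hαsupp : ∀ n, M < n → α n = 0)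
    (hα1 : ∑ n ∈ Finset.range (M + 1), α n = 1)
    (h : 𝒳 → ℝ) (c lam : ℝ) (hlam : 0 < lam)
    (γ : ℕ × 𝒳 → ℝ)
    (hγdef : ∀ n x, γ (n, x) =
      α n * ν x * Real.exp (lam * n * h x) / ∑ y, ν y * Real.exp (lam * n * h y))
    (hγc : ∑ n ∈ Finset.range (M + 1), ∑ x, (n : ℝ) * h x * γ (n, x) = c)
    (γ' : ℕ × 𝒳 → ℝ) (hγ'0 : ∀ p, 0 ≤ γ' p)
    (hγ'supp : ∀ n x, M < n → γ' (n, x) = 0)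
    (hγ'marg : ∀ n ≤ M, ∑ x, γ' (n, x) = α n)
    (hγ'c : c ≤ ∑ n ∈ Finset.range (M + 1), ∑ x, (n : ℝ) * h x * γ' (n, x)) :
    relEnt γ (fun p : ℕ × 𝒳 => α p.1 * ν p.2) ≤ relEnt γ' (fun p : ℕ × 𝒳 => α p.1 * ν p.2) ∧
      (relEnt γ' (fun p : ℕ × 𝒳 => α p.1 * ν p.2) = relEnt γ (fun p : ℕ × 𝒳 => α p.1 * ν p.2)
        ↔ γ' = γ) := by
  have outside {n : ℕ} (hn : n ∉ Finset.range (M + 1)) : M < n := by simpa using hn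
  have hγoff : ∀ n ∉ Finset.range (M + 1), ∀ x, γ (n, x) = 0 := fun n hn x => by
    simp [hγdef, hαsupp n (outside hn)]
  have hγ'off : ∀ n ∉ Finset.range (M + 1), ∀ x, γ' (n, x) = 0 :=
    fun n hn x => hγ'supp n x (outside hn)
  have hmarg : ∀ n, ∑ x, γ' (n, x) = α n := fun n => by
    rcases le_or_gt n M with hn | hn
    · exact hγ'marg n hn
    · simp [hγ'supp n _ hn, hαsupp n hn]
  have hγfin : relEnt γ (fun p : ℕ × 𝒳 => α p.1 * ν p.2) ≠ ⊤ := relEnt_ne_top_iff.2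
    ⟨fun p hp => by simp [hγdef p.1 p.2, hp],
      (hasSum_sum_sum_of_forall_notMem_eq_zero (s := Finset.range (M + 1))
        fun n hn x => by simp [hγoff n hn x]).summable⟩
  exact tilted_minimizes_relative_entropy_general (f := fun p => p.1 * h p.2) hν0
    (hν1 ▸ hasSum_fintype ν) hα0 (summable_of_ne_finset_zero fun n hn => hαsupp n (outside hn))
    hlam.le (fun n => (hasSum_fintype _).summable)
    (fun n x => by simp [hγdef, expTilt, partitionFunction, mul_assoc, mul_div_assoc]) hγfin
    (hγc ▸ hasSum_sum_sum_of_forall_notMem_eq_zero fun n hn x => by simp [hγoff n hn x])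
    hγ'0 (fun n => hmarg n ▸ hasSum_fintype _)
    (hasSum_sum_sum_of_forall_notMem_eq_zero fun n hn x => by simp [hγ'off n hn x]) hγ'c
end
end

section
/- Let μ be a probability mass function on T₁ with 0 < β := Σ_τ μ(τ)·deg(τ) < ∞, let η₁ be the law on T₁ with degree distribution Q and i.i.d. marks, where Q has finite nonzero mean, and assume μ is absolutely continuous with respect to η₁. Then μ̌ is a probability mass function on T₁, i.e. Σ_{(x,m)∈T₁} η₁(x,m)·∏_{(a,y,y′)∈m} (μ̄¹(a,y)/η̄₁¹(a,y)) = 1. -/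
open scoped BigOperators ENNReal Classical

noncomputable section

/-- Depth-1 rooted marked trees: the root mark together with the multiset of
(vertex mark, edge mark toward the root, edge mark at the root) triples of the
neighbors of the root. -/
abbrev T1 (𝒳 𝒴 : Type) : Type := 𝒳 × Multiset (𝒳 × 𝒴 × 𝒴)

section Defs

variable {𝒳 𝒴 : Type} [Fintype 𝒳] [Fintype 𝒴] [DecidableEq 𝒳] [DecidableEq 𝒴]

/-- Degree of the root of a depth-1 tree. -/
def deg (τ : T1 𝒳 𝒴) : ℕ := Multiset.card τ.2

/-- Symmetrized edge-mark distribution `ξ̄(y, y') = (ξ(y, y') + ξ(y', y)) / 2`. -/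
def xiBar (ξ : 𝒴 × 𝒴 → ℝ) (y y' : 𝒴) : ℝ := (ξ (y, y') + ξ (y', y)) / 2

/-- Multinomial coefficient `card m ! / ∏ₛ (multiplicity of s in m)!`. -/
def ordCoeff (m : Multiset (𝒳 × 𝒴 × 𝒴)) : ℝ :=
  (Nat.factorial (Multiset.card m) : ℝ) /
    ∏ s ∈ m.toFinset, (Nat.factorial (m.count s) : ℝ)

/-- The law `η₁` on `T1` with root-degree distribution `Q` and i.i.d. marks:
`η₁ (x, m) = ν x · Q (card m) · (card m)!/∏ₛ count s !· ∏_{(a,y,y') ∈ m} ν a · ξ̄ y y'`. -/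
def eta1 (ν : 𝒳 → ℝ) (ξ : 𝒴 × 𝒴 → ℝ) (Q : ℕ → ℝ) (τ : T1 𝒳 𝒴) : ℝ :=
  ν τ.1 * Q (Multiset.card τ.2) * ordCoeff τ.2 *
    (τ.2.map fun p => ν p.1 * xiBar ξ p.2.1 p.2.2).prod

/-- Mean root degree `β = ∑_τ μ τ · deg τ`. -/
def meanDeg (μ : T1 𝒳 𝒴 → ℝ) : ℝ := ∑' τ : T1 𝒳 𝒴, μ τ * (deg τ : ℝ)

/-- The neighbor–root marginal `μ̄^{1,o}`:
`μ̄^{1,o} ((a,y), (b,y')) = (1/β) ∑_{m} μ (b, m) · (multiplicity of (a,y,y') in m)`. -/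
def nbrRoot (μ : T1 𝒳 𝒴 → ℝ) (p : (𝒳 × 𝒴) × (𝒳 × 𝒴)) : ℝ :=
  (1 / meanDeg μ) *
    ∑' m : Multiset (𝒳 × 𝒴 × 𝒴), μ (p.2.1, m) * (m.count (p.1.1, p.1.2, p.2.2) : ℝ)

/-- First marginal `μ̄¹` of `μ̄^{1,o}`. -/
def marg1 (μ : T1 𝒳 𝒴 → ℝ) (u : 𝒳 × 𝒴) : ℝ := ∑ v : 𝒳 × 𝒴, nbrRoot μ (u, v)

/-- Second marginal `μ̄ᵒ` of `μ̄^{1,o}`. -/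
def margO (μ : T1 𝒳 𝒴 → ℝ) (v : 𝒳 × 𝒴) : ℝ := ∑ u : 𝒳 × 𝒴, nbrRoot μ (u, v)

/-- Conditional law `μ̄^{1|o} (u | v) = μ̄^{1,o}(u,v) / μ̄ᵒ(v)` (and `0` if `μ̄ᵒ(v) = 0`). -/
def condNbr (μ : T1 𝒳 𝒴 → ℝ) (u v : 𝒳 × 𝒴) : ℝ :=
  if 0 < margO μ v then nbrRoot μ (u, v) / margO μ v else 0

/-- `μ̌ (x, m) = η₁ (x, m) · ∏_{(a,y,y') ∈ m} μ̄¹(a,y) / η̄₁¹(a,y)` (product with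
multiplicity; in Lean a ratio with zero denominator is `0`). -/
def muCheck (ν : 𝒳 → ℝ) (ξ : 𝒴 × 𝒴 → ℝ) (Q : ℕ → ℝ) (μ : T1 𝒳 𝒴 → ℝ) (τ : T1 𝒳 𝒴) : ℝ :=
  eta1 ν ξ Q τ *
    (τ.2.map fun p => marg1 μ (p.1, p.2.1) / marg1 (eta1 ν ξ Q) (p.1, p.2.1)).prod

/-- `μ̂ (x, m) = η₁ (x, m) · ∏_{(a,y,y') ∈ m} μ̄^{1|o}((a,y)|(x,y')) / η̄₁^{1|o}((a,y)|(x,y'))`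
(product with multiplicity; a ratio with zero denominator is `0`). -/
def muHat (ν : 𝒳 → ℝ) (ξ : 𝒴 × 𝒴 → ℝ) (Q : ℕ → ℝ) (μ : T1 𝒳 𝒴 → ℝ) (τ : T1 𝒳 𝒴) : ℝ :=
  eta1 ν ξ Q τ *
    (τ.2.map fun p =>
      condNbr μ (p.1, p.2.1) (τ.1, p.2.2) /
        condNbr (eta1 ν ξ Q) (p.1, p.2.1) (τ.1, p.2.2)).prod

end Defs

/-!
Conditionally on the degree, the neighbors under `η₁` are i.i.d. with law
`p (a, y, y') = ν a · ξ̄(y, y')`, and by size-biasing `η̄₁¹` is the `(a, y)`-marginal of `p`.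
Reweighting every neighbor by `μ̄¹ / η̄₁¹` therefore keeps the neighbors i.i.d. and only replaces
`p` by a law whose `(a, y)`-marginal is `μ̄¹`; here `μ̄¹ ≪ η̄₁¹` ensures that no mass is lost.
As `μ̄¹` has total mass one, so does the new law, and the multinomial theorem then gives `μ̌` the
total mass `∑ k, Q k = 1`.
-/

section SumLemmas

lemma hasSum_of_hasSum_fiber {ι κ : Type*} {f : ι → ℝ} (hf : ∀ i, 0 ≤ f i) (g : ι → κ)
    {F : κ → ℝ} {c : ℝ} (hfib : ∀ k, HasSum (fun i : {i // g i = k} => f i) (F k))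
    (hF : HasSum F c) : HasSum f c := by
  rw [← (Equiv.sigmaFiberEquiv g).hasSum_iff]
  refine HasSum.sigma_of_hasSum hF hfib ((summable_sigma_of_nonneg fun _ => hf _).2
    ⟨fun k => (hfib k).summable, ?_⟩)
  exact hF.summable.congr fun k => (hfib k).tsum_eq.symm

lemma hasSum_prod_mul_of_fintype {ι κ : Type*} [Fintype ι] (w : ι → ℝ) {f : κ → ℝ} {c : ℝ}
    (hf : HasSum f c) : HasSum (fun x : ι × κ => w x.1 * f x.2) ((∑ i, w i) * c) :=
  (hasSum_fintype w).mul hf (summable_mul_of_summable_norm .of_finite hf.summable.norm)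

variable {α : Type*} [DecidableEq α]

lemma summable_mul_count {f : Multiset α → ℝ} (hf : Summable fun m => f m * (m.card : ℝ)) (s : α) :
    Summable fun m => f m * (m.count s : ℝ) := by
  refine hf.norm.of_norm_bounded fun m => ?_
  simp only [norm_mul, RCLike.norm_natCast]
  gcongr
  exact m.count_le_card s

lemma sum_tsum_mul_count [Fintype α] {f : Multiset α → ℝ}
    (hf : Summable fun m => f m * (m.card : ℝ)) :
    ∑ s, ∑' m, f m * (m.count s : ℝ) = ∑' m, f m * (m.card : ℝ) := by
  rw [← Summable.tsum_finsetSum fun s _ => summable_mul_count hf s]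
  refine tsum_congr fun m => ?_
  rw [← Finset.mul_sum, ← Nat.cast_sum, Multiset.sum_count_eq_card fun a _ => Finset.mem_univ a]

end SumLemmas

section IidLaw

variable {α : Type*} [DecidableEq α]

lemma countPerms_cons_mul_count_cons (s : α) (m : Multiset α) :
    (s ::ₘ m).countPerms * (s ::ₘ m).count s = (m.card + 1) * m.countPerms := by
  have hfilter : (s ::ₘ m).filter (s ≠ ·) = m.filter (s ≠ ·) :=
    Multiset.filter_cons_of_neg m (not_not.2 rfl)
  rw [Multiset.countPerms_filter_ne s (s ::ₘ m), Multiset.countPerms_filter_ne s m, hfilter,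
    Multiset.card_cons, Multiset.count_cons_self, mul_right_comm, ← Nat.add_one_mul_choose_eq,
    mul_assoc]

/-- The law of the multiset `{X₁, …, X_K}` where `K` has law `Q` and the `Xᵢ` are i.i.d. with law
`p`, independent of `K`. Neither `Q` nor `p` is required to be normalized. -/
def iidLaw (Q : ℕ → ℝ) (p : α → ℝ) (m : Multiset α) : ℝ :=
  Q m.card * m.countPerms * (m.map p).prod

variable {Q : ℕ → ℝ} {p : α → ℝ}

lemma iidLaw_nonneg (hQ : ∀ k, 0 ≤ Q k) (hp : ∀ s, 0 ≤ p s) (m : Multiset α) :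
    0 ≤ iidLaw Q p m := by
  have hprod : 0 ≤ (m.map p).prod := Multiset.prod_nonneg <| by simpa using fun s _ => hp s
  have := hQ m.card
  unfold iidLaw
  positivity

lemma iidLaw_mul_card (Q : ℕ → ℝ) (p : α → ℝ) (m : Multiset α) :
    iidLaw Q p m * m.card = iidLaw (fun k => k * Q k) p m := by
  unfold iidLaw
  ring

lemma iidLaw_cons_mul_count_cons (Q : ℕ → ℝ) (p : α → ℝ) (s : α) (m : Multiset α) :
    iidLaw Q p (s ::ₘ m) * (s ::ₘ m).count s =
      p s * iidLaw (fun k => (k + 1) * Q (k + 1)) p m := by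
  have hcount : ((s ::ₘ m).countPerms * (s ::ₘ m).count s : ℝ) = (m.card + 1) * m.countPerms :=
    mod_cast countPerms_cons_mul_count_cons s m
  simp only [iidLaw, Multiset.card_cons, Multiset.map_cons, Multiset.prod_cons]
  linear_combination Q (m.card + 1) * (p s * (m.map p).prod) * hcount

variable [Fintype α]

lemma hasSum_iidLaw {c : ℝ} (hQ : ∀ k, 0 ≤ Q k) (hp : ∀ s, 0 ≤ p s)
    (hc : HasSum (fun k => Q k * (∑ s, p s) ^ k) c) : HasSum (iidLaw Q p) c := by
  refine hasSum_of_hasSum_fiber (iidLaw_nonneg hQ hp) Multiset.card (fun k => ?_) hc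
  have hsym : Q k * (∑ s, p s) ^ k = ∑ m : Sym α k, iidLaw Q p m.1 := by
    rw [Finset.sum_pow, Finset.sym_univ, Finset.mul_sum]
    refine Finset.sum_congr rfl fun m _ => ?_
    rw [iidLaw, m.2, mul_assoc]
  rw [hsym]
  exact hasSum_fintype fun m : Sym α k => iidLaw Q p m.1

lemma hasSum_iidLaw_mul_card {c : ℝ} (hQ : ∀ k, 0 ≤ Q k) (hp : ∀ s, 0 ≤ p s)
    (hc : HasSum (fun k : ℕ => k * Q k * (∑ s, p s) ^ k) c) :
    HasSum (fun m => iidLaw Q p m * m.card) c := by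
  simp only [iidLaw_mul_card]
  exact hasSum_iidLaw (fun k => mul_nonneg k.cast_nonneg (hQ k)) hp hc

lemma hasSum_iidLaw_mul_count {c : ℝ} (hQ : ∀ k, 0 ≤ Q k) (hp : ∀ s, 0 ≤ p s)
    (hc : HasSum (fun k : ℕ => k * Q k * (∑ s, p s) ^ (k - 1)) c) (s : α) :
    HasSum (fun m => iidLaw Q p m * m.count s) (p s * c) := by
  have hshift : HasSum (fun k : ℕ => (k + 1) * Q (k + 1) * (∑ s, p s) ^ k) c := by
    simpa using (hasSum_nat_add_iff' 1).2 hc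
  have hinj : Function.Injective (Multiset.cons s) := fun _ _ => (Multiset.cons_inj_right s).1
  rw [← hinj.hasSum_iff]
  · simp only [Function.comp_def, iidLaw_cons_mul_count_cons]
    exact (hasSum_iidLaw (fun k => mul_nonneg (by positivity) (hQ _)) hp hshift).mul_left (p s)
  · intro m hm
    have hs : s ∉ m := fun hs => hm <| (Multiset.exists_cons_of_mem hs).imp fun _ => Eq.symm
    simp [Multiset.count_eq_zero_of_notMem hs]

end IidLaw

section Marginals

variable {𝒳 𝒴 : Type} {μ η : T1 𝒳 𝒴 → ℝ}

lemma summable_mul_card_of_summable_mul_deg (hμ : Summable fun τ => μ τ * (deg τ : ℝ)) (b : 𝒳) :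
    Summable fun m => μ (b, m) * (m.card : ℝ) :=
  hμ.comp_injective (Prod.mk_right_injective b)

variable [DecidableEq 𝒳] [DecidableEq 𝒴]

lemma nbrRoot_nonneg (hμ : ∀ τ, 0 ≤ μ τ) (p : (𝒳 × 𝒴) × (𝒳 × 𝒴)) : 0 ≤ nbrRoot μ p :=
  have hβ : 0 ≤ meanDeg μ := tsum_nonneg fun τ => mul_nonneg (hμ τ) (Nat.cast_nonneg _)
  mul_nonneg (one_div_nonneg.2 hβ) <| tsum_nonneg fun _ => mul_nonneg (hμ _) (Nat.cast_nonneg _)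

lemma nbrRoot_eq_zero_of_absolutelyContinuous (hη : ∀ τ, 0 ≤ η τ)
    (hηdeg : Summable fun τ => η τ * (deg τ : ℝ)) (hηβ : meanDeg η ≠ 0)
    (hμη : ∀ τ, η τ = 0 → μ τ = 0) {p : (𝒳 × 𝒴) × (𝒳 × 𝒴)} (hp : nbrRoot η p = 0) :
    nbrRoot μ p = 0 := by
  have hsum := summable_mul_count (summable_mul_card_of_summable_mul_deg hηdeg p.2.1)
    (p.1.1, p.1.2, p.2.2)
  have hzero : ∑' m, η (p.2.1, m) * (m.count (p.1.1, p.1.2, p.2.2) : ℝ) = 0 :=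
    (mul_eq_zero.1 hp).resolve_left (one_div_ne_zero hηβ)
  have hterm := (hasSum_zero_iff_of_nonneg fun m => mul_nonneg (hη _) (Nat.cast_nonneg _)).1
    (hzero ▸ hsum.hasSum)
  have hμterm (m) : μ (p.2.1, m) * (m.count (p.1.1, p.1.2, p.2.2) : ℝ) = 0 :=
    mul_eq_zero.2 <| (mul_eq_zero.1 (congrFun hterm m)).imp_left (hμη _)
  simp only [nbrRoot, hμterm, tsum_zero, mul_zero]

variable [Fintype 𝒳] [Fintype 𝒴]

lemma marg1_nonneg (hμ : ∀ τ, 0 ≤ μ τ) (u : 𝒳 × 𝒴) : 0 ≤ marg1 μ u :=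
  Finset.sum_nonneg fun _ _ => nbrRoot_nonneg hμ _

lemma marg1_eq_zero_of_absolutelyContinuous (hη : ∀ τ, 0 ≤ η τ)
    (hηdeg : Summable fun τ => η τ * (deg τ : ℝ)) (hηβ : meanDeg η ≠ 0)
    (hμη : ∀ τ, η τ = 0 → μ τ = 0) {u : 𝒳 × 𝒴} (hu : marg1 η u = 0) : marg1 μ u = 0 := by
  have hroot := (Finset.sum_eq_zero_iff_of_nonneg fun v _ => nbrRoot_nonneg hη (u, v)).1 hu
  exact Finset.sum_eq_zero fun v hv =>
    nbrRoot_eq_zero_of_absolutelyContinuous hη hηdeg hηβ hμη (hroot v hv)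

lemma sum_marg1 (hμdeg : Summable fun τ => μ τ * (deg τ : ℝ)) (hμβ : meanDeg μ ≠ 0) :
    ∑ u, marg1 μ u = 1 := by
  let N (b : 𝒳) (s : 𝒳 × 𝒴 × 𝒴) : ℝ := ∑' m, μ (b, m) * (m.count s : ℝ)
  have hN : ∑ b, ∑ s, N b s = meanDeg μ := calc
    ∑ b, ∑ s, N b s = ∑ b, ∑' m, μ (b, m) * (m.card : ℝ) :=
      Finset.sum_congr rfl fun b _ =>
        sum_tsum_mul_count (summable_mul_card_of_summable_mul_deg hμdeg b)
    _ = meanDeg μ := by rw [meanDeg, hμdeg.tsum_prod, tsum_fintype]; rfl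
  calc ∑ u, marg1 μ u
      = 1 / meanDeg μ * ∑ u : 𝒳 × 𝒴, ∑ v : 𝒳 × 𝒴, N v.1 (u.1, u.2, v.2) := by
        simp only [marg1, nbrRoot, Finset.mul_sum, N]
    _ = 1 / meanDeg μ * ∑ b, ∑ s, N b s := by
        simp only [Fintype.sum_prod_type]
        rw [Finset.sum_congr rfl fun a _ => Finset.sum_comm, Finset.sum_comm]
    _ = 1 := by rw [hN, one_div_mul_cancel hμβ]

end Marginals

section Eta1

variable {𝒳 𝒴 : Type}

/-- The law `(a, y, y') ↦ ν a · ξ̄(y, y')` of a single neighbor under `η₁`. -/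
def nbrLaw (ν : 𝒳 → ℝ) (ξ : 𝒴 × 𝒴 → ℝ) (s : 𝒳 × 𝒴 × 𝒴) : ℝ :=
  ν s.1 * xiBar ξ s.2.1 s.2.2

variable {ν : 𝒳 → ℝ} {ξ : 𝒴 × 𝒴 → ℝ} {Q : ℕ → ℝ}

lemma nbrLaw_nonneg (hν : ∀ x, 0 ≤ ν x) (hξ : ∀ q, 0 ≤ ξ q) (s : 𝒳 × 𝒴 × 𝒴) :
    0 ≤ nbrLaw ν ξ s :=
  mul_nonneg (hν _) (div_nonneg (add_nonneg (hξ _) (hξ _)) zero_le_two)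

lemma sum_xiBar [Fintype 𝒴] (ξ : 𝒴 × 𝒴 → ℝ) : ∑ q : 𝒴 × 𝒴, xiBar ξ q.1 q.2 = ∑ q, ξ q := by
  have hswap : ∑ q : 𝒴 × 𝒴, ξ (q.2, q.1) = ∑ q, ξ q := (Equiv.prodComm 𝒴 𝒴).sum_comp ξ
  simp only [xiBar, Prod.mk.eta, ← Finset.sum_div, Finset.sum_add_distrib, hswap, add_self_div_two]

lemma sum_nbrLaw [Fintype 𝒳] [Fintype 𝒴] (ν : 𝒳 → ℝ) (ξ : 𝒴 × 𝒴 → ℝ) :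
    ∑ s, nbrLaw ν ξ s = (∑ x, ν x) * ∑ q, ξ q := by
  rw [← sum_xiBar ξ, Finset.sum_mul_sum, Fintype.sum_prod_type]
  rfl

variable [DecidableEq 𝒳] [DecidableEq 𝒴]

lemma ordCoeff_eq_countPerms (m : Multiset (𝒳 × 𝒴 × 𝒴)) : ordCoeff m = m.countPerms := by
  rw [ordCoeff, Multiset.countPerms, Finsupp.multinomial_eq, Nat.multinomial,
    Nat.cast_div (Nat.prod_factorial_dvd_factorial_sum _ _)
      (Nat.cast_ne_zero.2 (Nat.prod_factorial_pos _ _).ne')]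
  simp

lemma eta1_eq_mul_iidLaw (ν : 𝒳 → ℝ) (ξ : 𝒴 × 𝒴 → ℝ) (Q : ℕ → ℝ) (τ : T1 𝒳 𝒴) :
    eta1 ν ξ Q τ = ν τ.1 * iidLaw Q (nbrLaw ν ξ) τ.2 := by
  rw [eta1, iidLaw, ordCoeff_eq_countPerms, mul_assoc, mul_assoc, mul_assoc]
  rfl

lemma eta1_nonneg (hν : ∀ x, 0 ≤ ν x) (hξ : ∀ q, 0 ≤ ξ q) (hQ : ∀ k, 0 ≤ Q k) (τ : T1 𝒳 𝒴) :
    0 ≤ eta1 ν ξ Q τ := by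
  rw [eta1_eq_mul_iidLaw]
  exact mul_nonneg (hν _) (iidLaw_nonneg hQ (nbrLaw_nonneg hν hξ) _)

variable [Fintype 𝒳] [Fintype 𝒴]

lemma hasSum_eta1_mul_deg {c : ℝ} (hν : ∀ x, 0 ≤ ν x) (hν1 : ∑ x, ν x = 1)
    (hξ : ∀ q, 0 ≤ ξ q) (hξ1 : ∑ q, ξ q = 1) (hQ : ∀ k, 0 ≤ Q k)
    (hc : HasSum (fun k : ℕ => k * Q k) c) :
    HasSum (fun τ : T1 𝒳 𝒴 => eta1 ν ξ Q τ * deg τ) c := by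
  have hcard : HasSum (fun m => iidLaw Q (nbrLaw ν ξ) m * m.card) c :=
    hasSum_iidLaw_mul_card hQ (nbrLaw_nonneg hν hξ) (by simpa [sum_nbrLaw, hν1, hξ1] using hc)
  simpa only [eta1_eq_mul_iidLaw, deg, mul_assoc, hν1, one_mul] using
    hasSum_prod_mul_of_fintype ν hcard

lemma nbrRoot_eta1 {c : ℝ} (hν : ∀ x, 0 ≤ ν x) (hν1 : ∑ x, ν x = 1)
    (hξ : ∀ q, 0 ≤ ξ q) (hξ1 : ∑ q, ξ q = 1) (hQ : ∀ k, 0 ≤ Q k)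
    (hc : HasSum (fun k : ℕ => k * Q k) c) (hc0 : c ≠ 0) (p : (𝒳 × 𝒴) × (𝒳 × 𝒴)) :
    nbrRoot (eta1 ν ξ Q) p = ν p.2.1 * nbrLaw ν ξ (p.1.1, p.1.2, p.2.2) := by
  have hcount := hasSum_iidLaw_mul_count hQ (nbrLaw_nonneg hν hξ)
    (by simpa [sum_nbrLaw, hν1, hξ1] using hc) (p.1.1, p.1.2, p.2.2)
  rw [nbrRoot, meanDeg, (hasSum_eta1_mul_deg hν hν1 hξ hξ1 hQ hc).tsum_eq]
  simp only [eta1_eq_mul_iidLaw, mul_assoc]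
  rw [(hcount.mul_left _).tsum_eq]
  field_simp

lemma marg1_eta1 {c : ℝ} (hν : ∀ x, 0 ≤ ν x) (hν1 : ∑ x, ν x = 1)
    (hξ : ∀ q, 0 ≤ ξ q) (hξ1 : ∑ q, ξ q = 1) (hQ : ∀ k, 0 ≤ Q k)
    (hc : HasSum (fun k : ℕ => k * Q k) c) (hc0 : c ≠ 0) (u : 𝒳 × 𝒴) :
    marg1 (eta1 ν ξ Q) u = ∑ y', nbrLaw ν ξ (u.1, u.2, y') := by
  simp only [marg1, nbrRoot_eta1 hν hν1 hξ hξ1 hQ hc hc0]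
  simp only [Fintype.sum_prod_type, ← Finset.mul_sum, ← Finset.sum_mul, hν1, one_mul]

end Eta1

section MuCheck

variable {𝒳 𝒴 : Type} [Fintype 𝒳] [Fintype 𝒴] [DecidableEq 𝒳] [DecidableEq 𝒴]

/-- The law of a single neighbor under `μ̌`: the law `nbrLaw ν ξ` of a neighbor under `η₁`,
reweighted by `μ̄¹ / η̄₁¹`. -/
def tiltedNbrLaw (ν : 𝒳 → ℝ) (ξ : 𝒴 × 𝒴 → ℝ) (Q : ℕ → ℝ) (μ : T1 𝒳 𝒴 → ℝ)
    (s : 𝒳 × 𝒴 × 𝒴) : ℝ :=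
  nbrLaw ν ξ s * (marg1 μ (s.1, s.2.1) / marg1 (eta1 ν ξ Q) (s.1, s.2.1))

variable {ν : 𝒳 → ℝ} {ξ : 𝒴 × 𝒴 → ℝ} {Q : ℕ → ℝ} {μ : T1 𝒳 𝒴 → ℝ}

lemma tiltedNbrLaw_nonneg (hν : ∀ x, 0 ≤ ν x) (hξ : ∀ q, 0 ≤ ξ q) (hQ : ∀ k, 0 ≤ Q k)
    (hμ : ∀ τ, 0 ≤ μ τ) (s : 𝒳 × 𝒴 × 𝒴) : 0 ≤ tiltedNbrLaw ν ξ Q μ s :=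
  mul_nonneg (nbrLaw_nonneg hν hξ s) <|
    div_nonneg (marg1_nonneg hμ _) (marg1_nonneg (eta1_nonneg hν hξ hQ) _)

lemma muCheck_eq_mul_iidLaw (ν : 𝒳 → ℝ) (ξ : 𝒴 × 𝒴 → ℝ) (Q : ℕ → ℝ) (μ : T1 𝒳 𝒴 → ℝ)
    (τ : T1 𝒳 𝒴) :
    muCheck ν ξ Q μ τ = ν τ.1 * iidLaw Q (tiltedNbrLaw ν ξ Q μ) τ.2 := by
  rw [muCheck, eta1_eq_mul_iidLaw, iidLaw, mul_assoc, mul_assoc, ← Multiset.prod_map_mul]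
  rfl

lemma sum_tiltedNbrLaw_right {c : ℝ} (hν : ∀ x, 0 ≤ ν x) (hν1 : ∑ x, ν x = 1)
    (hξ : ∀ q, 0 ≤ ξ q) (hξ1 : ∑ q, ξ q = 1) (hQ : ∀ k, 0 ≤ Q k)
    (hc : HasSum (fun k : ℕ => k * Q k) c) (hc0 : c ≠ 0) {u : 𝒳 × 𝒴}
    (hμη : marg1 (eta1 ν ξ Q) u = 0 → marg1 μ u = 0) :
    ∑ y', tiltedNbrLaw ν ξ Q μ (u.1, u.2, y') = marg1 μ u := by
  simp only [tiltedNbrLaw, ← Finset.sum_mul]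
  rw [← marg1_eta1 hν hν1 hξ hξ1 hQ hc hc0, mul_div_cancel_of_imp' hμη]

end MuCheck

theorem muCheck_is_probability_general
    {𝒳 𝒴 : Type} [Fintype 𝒳] [Fintype 𝒴] [DecidableEq 𝒳] [DecidableEq 𝒴]
    (ν : 𝒳 → ℝ) (hν0 : ∀ x, 0 ≤ ν x) (hν1 : ∑ x, ν x = 1)
    (ξ : 𝒴 × 𝒴 → ℝ) (hξ0 : ∀ p, 0 ≤ ξ p) (hξ1 : ∑ p : 𝒴 × 𝒴, ξ p = 1)
    (Q : ℕ → ℝ) (hQ0 : ∀ k, 0 ≤ Q k) (hQ1 : HasSum Q 1)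
    (hQm : Summable fun k : ℕ => (k : ℝ) * Q k)
    (hQpos : 0 < ∑' k : ℕ, (k : ℝ) * Q k)
    (μ : T1 𝒳 𝒴 → ℝ) (hμ0 : ∀ τ, 0 ≤ μ τ)
    (hβfin : Summable fun τ : T1 𝒳 𝒴 => μ τ * (deg τ : ℝ))
    (hβpos : 0 < meanDeg μ)
    (habs : ∀ u, marg1 (eta1 ν ξ Q) u = 0 → marg1 μ u = 0) :
    HasSum (muCheck ν ξ Q μ) 1 := by
  have hmass : ∑ s, tiltedNbrLaw ν ξ Q μ s = 1 := calc
    ∑ s, tiltedNbrLaw ν ξ Q μ s = ∑ u : 𝒳 × 𝒴, ∑ y', tiltedNbrLaw ν ξ Q μ (u.1, u.2, y') := by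
      simp only [Fintype.sum_prod_type]
    _ = ∑ u, marg1 μ u := Finset.sum_congr rfl fun u _ =>
      sum_tiltedNbrLaw_right hν0 hν1 hξ0 hξ1 hQ0 hQm.hasSum hQpos.ne' (habs u)
    _ = 1 := sum_marg1 hβfin hβpos.ne'
  have hnbrs : HasSum (iidLaw Q (tiltedNbrLaw ν ξ Q μ)) 1 :=
    hasSum_iidLaw hQ0 (tiltedNbrLaw_nonneg hν0 hξ0 hQ0 hμ0) (by simpa [hmass] using hQ1)
  simpa only [← muCheck_eq_mul_iidLaw, hν1, one_mul] using hasSum_prod_mul_of_fintype ν hnbrs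

/-- **`μ̌` is a probability measure.**
If `μ` is a pmf on `T1` with mean degree `β ∈ (0, ∞)`, `η₁` is the law with degree
distribution `Q` and i.i.d. marks, and `μ ≪ η₁`, then
`∑_{(x,m)} η₁ (x,m) · ∏_{(a,y,y') ∈ m} μ̄¹(a,y)/η̄₁¹(a,y) = 1`, i.e. `μ̌` is a pmf. -/
theorem muCheck_is_probability
    {𝒳 𝒴 : Type} [Fintype 𝒳] [Fintype 𝒴] [DecidableEq 𝒳] [DecidableEq 𝒴]
    (ν : 𝒳 → ℝ) (hν0 : ∀ x, 0 ≤ ν x) (hν1 : ∑ x, ν x = 1)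
    (ξ : 𝒴 × 𝒴 → ℝ) (hξ0 : ∀ p, 0 ≤ ξ p) (hξ1 : ∑ p : 𝒴 × 𝒴, ξ p = 1)
    (Q : ℕ → ℝ) (hQ0 : ∀ k, 0 ≤ Q k) (hQ1 : HasSum Q 1)
    (hQm : Summable fun k : ℕ => (k : ℝ) * Q k)
    (hQpos : 0 < ∑' k : ℕ, (k : ℝ) * Q k)
    (μ : T1 𝒳 𝒴 → ℝ) (hμ0 : ∀ τ, 0 ≤ μ τ) (hμ1 : HasSum μ 1)
    (hβfin : Summable fun τ : T1 𝒳 𝒴 => μ τ * (deg τ : ℝ))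
    (hβpos : 0 < meanDeg μ)
    (habs : ∀ τ, eta1 ν ξ Q τ = 0 → μ τ = 0) :
    HasSum (muCheck ν ξ Q μ) 1 := by
  have hdeg := hasSum_eta1_mul_deg hν0 hν1 hξ0 hξ1 hQ0 hQm.hasSum
  exact muCheck_is_probability_general ν hν0 hν1 ξ hξ0 hξ1 Q hQ0 hQ1 hQm hQpos μ hμ0 hβfin hβpos
    fun _ => marg1_eq_zero_of_absolutelyContinuous (eta1_nonneg hν0 hξ0 hQ0) hdeg.summable
      (hdeg.tsum_eq.trans_ne hQpos.ne') habs
end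
end
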